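/- There exists an ℰ-linear automorphism σ of L of order 12 such that for every point p = [a:b:c] of P²(𝔽₃), with corresponding point root x and line root l of the line {aX + bY + cZ = 0}, one has σ(x) = −ω l and σ(l) = x; moreover σ² is scalar multiplication by −ω. Conjugation by σ preserves G, so the group Q generated by G and σ fits in an exact sequence 1 → PGL₃(𝔽₃) → Q → ℤ/12ℤ → 1, and Q acts transitively and faithfully on the unit multiples of the 26 roots of D. -/

import Mathlib

noncomputable section

open ComplexConjugate

namespace Bimonster

/-- The primitive cube root of unity `ω = e^{2πi/3}`. -/
def ω : ℂ := Complex.exp (2 * (Real.pi : ℂ) * Complex.I / 3)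

/-- `θ = ω - ω̄ = √-3`. -/
def θ : ℂ := ω - conj ω

/-- `ξ = e^{-πi/6}`. -/
def ξ : ℂ := Complex.exp (-((Real.pi : ℂ) * Complex.I) / 6)

/-- Membership in the ring of Eisenstein integers `ℰ = ℤ[ω] ⊆ ℂ`. -/
def EisP (z : ℂ) : Prop := ∃ a b : ℤ, z = (a : ℂ) + (b : ℂ) * ω

/-- The units of the ring of Eisenstein integers. -/
def EisUnit (z : ℂ) : Prop :=
  z = 1 ∨ z = -1 ∨ z = ω ∨ z = -ω ∨ z = ω ^ 2 ∨ z = -ω ^ 2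

/-- The underlying 14-dimensional complex vector space of `L = 3E₈ ⊕ H`. -/
abbrev V : Type := Fin 14 → ℂ

/-- The Hermitian form of `L = 3E₈ ⊕ H`: negative definite standard form on the twelve
`E₈`-coordinates, and the hyperbolic cell with Gram matrix `[[0, θ̄], [θ, 0]]` on the
last two coordinates.  It is conjugate-linear in the first variable. -/
def herm (u v : V) : ℂ :=
  -(∑ i : Fin 12, conj (u (Fin.castLE (by norm_num) i)) * v (Fin.castLE (by norm_num) i)) +
    conj (u 12) * conj θ * v 13 + conj (u 13) * θ * v 12

/-- First generator of the ternary tetracode `𝒞₄ ⊆ 𝔽₃⁴`. -/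
def tet1 : Fin 4 → ℤ := ![1, 1, -1, 0]

/-- Second generator of the ternary tetracode `𝒞₄ ⊆ 𝔽₃⁴`. -/
def tet2 : Fin 4 → ℤ := ![0, 1, 1, 1]

/-- The complex `E₈` lattice: vectors of `ℰ⁴` whose reduction mod `θ` lies in the
ternary tetracode. -/
def inE8 (w : Fin 4 → ℂ) : Prop :=
  (∀ i, EisP (w i)) ∧
    ∃ s t : ℤ, ∀ i : Fin 4, ∃ a b : ℤ,
      w i - ((tet1 i * s + tet2 i * t : ℤ) : ℂ) = θ * ((a : ℂ) + (b : ℂ) * ω)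

/-- The lattice `L = 3E₈ ⊕ H` as a subset of `ℂ¹⁴`. -/
def Lset : Set V :=
  {v | (∀ k : Fin 3,
      inE8 fun i : Fin 4 =>
        v ⟨4 * (k : ℕ) + (i : ℕ), by have hk := k.isLt; have hi := i.isLt; omega⟩) ∧
    EisP (v 12) ∧ EisP (v 13)}

/-- A root of `L`: a primitive lattice vector of norm `-3`. -/
def IsRoot (r : V) : Prop :=
  r ∈ Lset ∧ herm r r = -3 ∧
    ∀ α : ℂ, EisP α → ∀ y ∈ Lset, r = α • y → EisUnit α

/-- The `μ`-reflection in a vector `r`: `v ↦ v − (1−μ)·r·⟨r,v⟩/|r|²`. -/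
def reflMap (μ : ℂ) (r v : V) : V := v - ((1 - μ) * herm r v / herm r r) • r

/-- The automorphism group of the lattice `L`: invertible `ℂ`-linear maps preserving
the lattice and the Hermitian form. -/
def AutL : Subgroup (V ≃ₗ[ℂ] V) where
  carrier := {g | (∀ v : V, v ∈ Lset ↔ g v ∈ Lset) ∧ ∀ u v : V, herm (g u) (g v) = herm u v}
  one_mem' := ⟨fun _ => Iff.rfl, fun _ _ => rfl⟩
  mul_mem' := by
    rintro f g ⟨hf1, hf2⟩ ⟨hg1, hg2⟩
    refine ⟨fun v => ?_, fun u v => ?_⟩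
    · exact (hg1 v).trans (hf1 (g v))
    · exact (hf2 (g u) (g v)).trans (hg2 u v)
  inv_mem' := by
    rintro g ⟨hg1, hg2⟩
    refine ⟨fun v => ?_, fun u v => ?_⟩
    · have h := hg1 (g.symm v)
      have hv : g (g.symm v) = v := g.apply_symm_apply v
      rw [hv] at h
      exact h.symm
    · have h := hg2 (g.symm u) (g.symm v)
      have hu : g (g.symm u) = u := g.apply_symm_apply u
      have hv : g (g.symm v) = v := g.apply_symm_apply v
      rw [hu, hv] at h
      exact h.symm

/-- The set of elements of `Aut(L)` acting as the `ω`-reflection in some root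
belonging to `S`. -/
def ReflAutos (S : Set V) : Set (V ≃ₗ[ℂ] V) :=
  {g | g ∈ AutL ∧ ∃ r ∈ S, ∀ v, g v = reflMap ω r v}

/-- The reflection group `R(L)`: the subgroup of `Aut(L)` generated by the
`ω`-reflections in all roots of `L`. -/
def RL : Subgroup (V ≃ₗ[ℂ] V) := Subgroup.closure (ReflAutos {r | IsRoot r})

/-- Two roots are adjacent when `|⟨a,b⟩| = √3`, i.e. when their `ω`-reflections braid. -/
def Adj (a b : V) : Prop := ‖herm a b‖ = Real.sqrt 3

/-- A set of roots is connected if the graph given by adjacency on it is connected. -/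
def ConnectedSet (Φ : Set V) : Prop :=
  ∀ a ∈ Φ, ∀ b ∈ Φ, Relation.ReflTransGen (fun x y => x ∈ Φ ∧ y ∈ Φ ∧ Adj x y) a b

/-- `Rad Φ` is the radical of a set `Φ` of roots: the closure of `Φ` under reflecting
members of the set in each other (and identification of unit multiples). -/
inductive Rad (Φ : Set V) : V → Prop
  | base {r : V} : r ∈ Φ → Rad Φ r
  | refl {a b : V} : Rad Φ a → Rad Φ b → Rad Φ (reflMap ω a b)
  | inv {a b : V} : Rad Φ a → Rad Φ b → Rad Φ (reflMap (conj ω) a b)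
  | unit {u : ℂ} {r : V} : EisUnit u → Rad Φ r → Rad Φ (u • r)

/-- Shorthand for the entry `-θω²` occurring in the coordinates of the 26 roots. -/
def qc : ℂ := -(θ * ω ^ 2)

/- The 26 roots of the diagram `D` in the coordinate system `3E₈ ⊕ H`. -/

def rA : V := ![0, 0, 0, 0, 0, 0, 0, 0, 0, 0, 0, 0, 1, ω ^ 2]
def rC1 : V := ![qc, 0, 0, 0, 0, 0, 0, 0, 0, 0, 0, 0, 0, 0]
def rC2 : V := ![0, 0, 0, 0, qc, 0, 0, 0, 0, 0, 0, 0, 0, 0]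
def rC3 : V := ![0, 0, 0, 0, 0, 0, 0, 0, qc, 0, 0, 0, 0, 0]
def rE1 : V := ![0, qc, 0, 0, 0, 0, 0, 0, 0, 0, 0, 0, 0, 0]
def rE2 : V := ![0, 0, 0, 0, 0, qc, 0, 0, 0, 0, 0, 0, 0, 0]
def rE3 : V := ![0, 0, 0, 0, 0, 0, 0, 0, 0, qc, 0, 0, 0, 0]
def rA1 : V := ![0, 0, 0, 0, 0, 0, 0, qc, 0, 0, 0, qc, ω, ω ^ 2]
def rA2 : V := ![0, 0, 0, qc, 0, 0, 0, 0, 0, 0, 0, qc, ω, ω ^ 2]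
def rA3 : V := ![0, 0, 0, qc, 0, 0, 0, qc, 0, 0, 0, 0, ω, ω ^ 2]
def rG1 : V := ![0, 0, 0, qc, 0, 0, -qc, qc, 0, 0, -qc, qc, 2 * ω, 2 * ω ^ 2]
def rG2 : V := ![0, 0, -qc, qc, 0, 0, 0, qc, 0, 0, -qc, qc, 2 * ω, 2 * ω ^ 2]
def rG3 : V := ![0, 0, -qc, qc, 0, 0, -qc, qc, 0, 0, 0, qc, 2 * ω, 2 * ω ^ 2]
def rF : V := ![0, 1, 1, -2, 0, 1, 1, -2, 0, 1, 1, -2, -2 + ω, -θ]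
def rB1 : V := ![1, 0, 1, -1, 0, 0, 0, 0, 0, 0, 0, 0, -1, 0]
def rB2 : V := ![0, 0, 0, 0, 1, 0, 1, -1, 0, 0, 0, 0, -1, 0]
def rB3 : V := ![0, 0, 0, 0, 0, 0, 0, 0, 1, 0, 1, -1, -1, 0]
def rD1 : V := ![1, 1, -1, 0, 0, 0, 0, 0, 0, 0, 0, 0, 0, 0]
def rD2 : V := ![0, 0, 0, 0, 1, 1, -1, 0, 0, 0, 0, 0, 0, 0]
def rD3 : V := ![0, 0, 0, 0, 0, 0, 0, 0, 1, 1, -1, 0, 0, 0]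
def rF1 : V := ![0, 1, 1, 1, 0, 0, 0, 0, 0, 0, 0, 0, 0, 0]
def rF2 : V := ![0, 0, 0, 0, 0, 1, 1, 1, 0, 0, 0, 0, 0, 0]
def rF3 : V := ![0, 0, 0, 0, 0, 0, 0, 0, 0, 1, 1, 1, 0, 0]
def rZ1 : V := ![0, 1, 1, -2, 1, 0, 1, -1, 1, 0, 1, -1, qc, -θ]
def rZ2 : V := ![1, 0, 1, -1, 0, 1, 1, -2, 1, 0, 1, -1, qc, -θ]
def rZ3 : V := ![1, 0, 1, -1, 1, 0, 1, -1, 0, 1, 1, -2, qc, -θ]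

/-- The 13 roots of `D` labelled by the points of `P²(𝔽₃)`. -/
def pt : Fin 13 → V :=
  ![rA, rC1, rC2, rC3, rE1, rE2, rE3, rA1, rA2, rA3, rG1, rG2, rG3]

/-- The 13 roots of `D` labelled by the lines of `P²(𝔽₃)`. -/
def lnr : Fin 13 → V :=
  ![rF, rB1, rB2, rB3, rD1, rD2, rD3, rF1, rF2, rF3, rZ1, rZ2, rZ3]

/-- The 26 roots of the diagram `D` (the incidence graph of `P²(𝔽₃)`). -/
def D26 : Set V := Set.range pt ∪ Set.range lnr

/-- The 16 roots forming the `M₆₆₆` diagram. -/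
def M16 : Set V :=
  Set.range
    (![rA, rB1, rB2, rB3, rC1, rC2, rC3, rD1, rD2, rD3, rE1, rE2, rE3, rF1, rF2, rF3] :
      Fin 16 → V)

/-- The 26 vectors `(ρ₁,…,ρ₂₆) = (x₁,…,x₁₃, ξl₁,…,ξl₁₃)`. -/
def ρv : Fin 26 → V := fun i =>
  if h : (i : ℕ) < 13 then pt ⟨(i : ℕ), h⟩
  else ξ • lnr ⟨(i : ℕ) - 13, by have := i.isLt; omega⟩

/-- The Weyl vector `ρ̄ = (Σ points + ξ Σ lines)/26`. -/
def ρbar : V := (26 : ℂ)⁻¹ • ((∑ i : Fin 13, pt i) + ξ • ∑ i : Fin 13, lnr i)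

/-- The height of a root: `ht(r) = |⟨ρ̄, r⟩| / |ρ̄|²`. -/
def ht (r : V) : ℝ := ‖herm ρbar r‖ / ‖herm ρbar ρbar‖

/-- The subgroup `G ≅ PGL₃(𝔽₃)` of `Aut(L)`: automorphisms of `L` preserving the set
of 13 point roots and the set of 13 line roots of the diagram `D`. -/
def Gsub : Subgroup (V ≃ₗ[ℂ] V) where
  carrier := {g | g ∈ AutL ∧ (⇑g) '' Set.range pt = Set.range pt ∧
    (⇑g) '' Set.range lnr = Set.range lnr}
  one_mem' := by
    refine ⟨one_mem AutL, ?_, ?_⟩ <;> simp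
  mul_mem' := by
    rintro f g ⟨hf0, hf1, hf2⟩ ⟨hg0, hg1, hg2⟩
    refine ⟨mul_mem hf0 hg0, ?_, ?_⟩
    · have hco : (⇑(f * g)) = (⇑f) ∘ (⇑g) := rfl
      rw [hco, Set.image_comp, hg1, hf1]
    · have hco : (⇑(f * g)) = (⇑f) ∘ (⇑g) := rfl
      rw [hco, Set.image_comp, hg2, hf2]
  inv_mem' := by
    rintro g ⟨hg0, hg1, hg2⟩
    refine ⟨inv_mem hg0, ?_, ?_⟩
    · conv_lhs => rw [← hg1]
      rw [← Set.image_comp]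
      have : (⇑g⁻¹ ∘ ⇑g) = id := by
        funext x; exact g.symm_apply_apply x
      rw [this, Set.image_id]
    · conv_lhs => rw [← hg2]
      rw [← Set.image_comp]
      have : (⇑g⁻¹ ∘ ⇑g) = id := by
        funext x; exact g.symm_apply_apply x
      rw [this, Set.image_id]

/-- The defining properties of the automorphism `σ`: it is an automorphism of `L`
which, for the polarity `δ` of `P²(𝔽₃)` pairing each point `x = [a:b:c]` with the
line `l = {aX+bY+cZ = 0}`, sends the point root `x` to `-ω·l` and the line root `l`
to `x`. -/
def SigmaSpec (σ : V ≃ₗ[ℂ] V) : Prop :=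
  σ ∈ AutL ∧ ∃ δ : Fin 13 ≃ Fin 13,
    (∀ i j, Adj (pt i) (lnr (δ j)) ↔ Adj (pt j) (lnr (δ i))) ∧
    (∀ i, σ (pt i) = (-ω) • lnr (δ i)) ∧
    (∀ i, σ (lnr (δ i)) = pt i)

/-- The group `Q` generated by `G` and `σ`. -/
def QGroup (σ : V ≃ₗ[ℂ] V) : Subgroup (V ≃ₗ[ℂ] V) :=
  Subgroup.closure ({σ} ∪ (Gsub : Set (V ≃ₗ[ℂ] V)))

/-- The projective general linear group `PGL₃(𝔽₃)`. -/
abbrev PGL3F3 : Type :=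
  Matrix.GeneralLinearGroup (Fin 3) (ZMod 3) ⧸
    Subgroup.center (Matrix.GeneralLinearGroup (Fin 3) (ZMod 3))

/-- The unit multiples of the 26 roots of `D`. -/
def UnitRoots : Set V := {w | ∃ u : ℂ, EisUnit u ∧ ∃ r ∈ D26, w = u • r}

/-!
The 26 roots of `D` generate `L` over `ℤ[ω]`, and their Gram matrix depends only on incidence in
`P²(𝔽₃)`. Since the form is nondegenerate, every replacement of the roots by unit multiples of
roots that preserves the Gram matrix extends uniquely to an isometry of `ℂ¹⁴`, which preserves `L`
as soon as the new vectors generate `L` as well.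

Collineations thus act on `L`, and `G ≅ PGL₃(𝔽₃)` becomes the fundamental theorem of projective
geometry over `𝔽₃`: modulo `PGL₃(𝔽₃)` a collineation fixes a frame, hence it preserves for each
point which coordinates vanish and which coincide, and over `𝔽₃` this determines the point.

The standard polarity, twisted by `-ω` on the points, gives `σ` with `σ² = -ω`. Even powers of `σ`
are scalars and odd ones exchange points and lines up to units, so `⟨σ⟩` meets `G` trivially and
`Q/G ≅ ⟨σ⟩ ≅ ℤ/12ℤ`.
-/

/-! ### Permutations, cyclic extensions and Gram matrices -/

theorem exists_perm_of_image_range_eq {ι X : Type*} {f : X → X} {v : ι → X}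
    (hf : f.Injective) (hv : v.Injective) (h : f '' Set.range v = Set.range v) :
    ∃ k : Equiv.Perm ι, ∀ i, f (v i) = v (k i) := by
  have hmem (i : ι) : ∃ j, v j = f (v i) := h.le ⟨v i, ⟨i, rfl⟩, rfl⟩
  choose k hk using hmem
  refine ⟨Equiv.ofBijective k ⟨fun i j hij => ?_, fun j => ?_⟩, fun i => (hk i).symm⟩
  · exact hv (hf (by rw [← hk, ← hk, hij]))
  · obtain ⟨_, ⟨i, rfl⟩, hi⟩ := h.ge ⟨j, rfl⟩
    exact ⟨i, hv ((hk i).trans hi)⟩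

theorem exists_monoidHom_zmod_of_disjoint_zpowers {Γ : Type*} [Group Γ] {H : Subgroup Γ} {s : Γ}
    (hs : s ∈ Subgroup.normalizer (H : Set Γ)) (hd : Disjoint (Subgroup.zpowers s) H) :
    ∃ ψ : ↥(Subgroup.zpowers s ⊔ H) →* Multiplicative (ZMod (orderOf s)),
      Function.Surjective ψ ∧ ψ.ker = H.subgroupOf (Subgroup.zpowers s ⊔ H) := by
  have hle : Subgroup.zpowers s ≤ Subgroup.normalizer (H : Set Γ) := by simpa
  have := Subgroup.normal_subgroupOf_sup_of_le_normalizer hle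
  have := Subgroup.normal_subgroupOf_of_le_normalizer hle
  have hbot : H.subgroupOf (Subgroup.zpowers s) = ⊥ := Subgroup.subgroupOf_eq_bot.2 hd.symm
  have hgen (x : Subgroup.zpowers s) : x ∈ Subgroup.zpowers ⟨s, Subgroup.mem_zpowers s⟩ := by
    obtain ⟨x, n, rfl⟩ := x
    exact ⟨n, rfl⟩
  let toCyclic : ↥(Subgroup.zpowers s ⊔ H) ⧸ H.subgroupOf (Subgroup.zpowers s ⊔ H) ≃*
      Multiplicative (ZMod (orderOf s)) :=
    (QuotientGroup.quotientInfEquivProdNormalizerQuotient _ _ hle).symm.trans <|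
      (QuotientGroup.quotientMulEquivOfEq hbot).trans <| QuotientGroup.quotientBot.trans
        (zmodMulEquivOfGenerator hgen (Nat.card_zpowers s)).symm
  exact ⟨toCyclic.toMonoidHom.comp (QuotientGroup.mk' _),
    toCyclic.surjective.comp (QuotientGroup.mk'_surjective _),
    (MonoidHom.ker_mulEquiv_comp _ toCyclic).trans (QuotientGroup.ker_mk' _)⟩

section GramMatrix

variable {K W I : Type*} [Field K] [AddCommGroup W] [Module K W] {τ : K →+* K}
  {B : W →ₛₗ[τ] W →ₗ[K] K} {r r' : I → W}

theorem linearCombination_eq_zero_iff_of_separatingRight (hB : B.SeparatingRight)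
    (hr : Submodule.span K (Set.range r) = ⊤) (c : I →₀ K) :
    Finsupp.linearCombination K r c = 0 ↔ ∀ i, (c.sum fun j a => a * B (r i) (r j)) = 0 := by
  have hsum (i : I) : B (r i) (Finsupp.linearCombination K r c) =
      c.sum fun j a => a * B (r i) (r j) := by
    simp [Finsupp.linearCombination_apply, map_finsuppSum]
  simp only [← hsum]
  refine ⟨fun h => by simp [h], fun h => hB _ fun x => ?_⟩
  have hx : x ∈ Submodule.span K (Set.range r) := by rw [hr]; trivial
  induction hx using Submodule.span_induction with
  | mem x hx => obtain ⟨i, rfl⟩ := hx; exact h i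
  | zero => simp
  | add x y _ _ hx hy => simp [hx, hy]
  | smul a x _ hx => simp [hx]

theorem exists_isometry_of_gram_eq (hB : B.SeparatingRight)
    (hr : Submodule.span K (Set.range r) = ⊤) (hr' : Submodule.span K (Set.range r') = ⊤)
    (hgram : ∀ i j, B (r' i) (r' j) = B (r i) (r j)) :
    ∃ T : W ≃ₗ[K] W, (∀ i, T (r i) = r' i) ∧ ∀ u v, B (T u) (T v) = B u v := by
  have hker : (Finsupp.linearCombination K r).ker = (Finsupp.linearCombination K r').ker := by
    ext c
    simp only [LinearMap.mem_ker, linearCombination_eq_zero_iff_of_separatingRight hB hr,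
      linearCombination_eq_zero_iff_of_separatingRight hB hr', hgram]
  have hsurj : Function.Surjective (Finsupp.linearCombination K r) := by
    rw [← LinearMap.range_eq_top, Finsupp.range_linearCombination, hr]
  have hsurj' : Function.Surjective (Finsupp.linearCombination K r') := by
    rw [← LinearMap.range_eq_top, Finsupp.range_linearCombination, hr']
  let T : W ≃ₗ[K] W := (LinearMap.quotKerEquivOfSurjective _ hsurj).symm ≪≫ₗ
    Submodule.quotEquivOfEq _ _ hker ≪≫ₗ LinearMap.quotKerEquivOfSurjective _ hsurj'
  have hT (i : I) : T (r i) = r' i := by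
    have hi : (LinearMap.quotKerEquivOfSurjective _ hsurj).symm (r i) =
        Submodule.Quotient.mk (Finsupp.single i 1) := by
      rw [LinearEquiv.symm_apply_eq]; simp
    simp [T, hi]
  have hform : (B.comp T.toLinearMap).compl₂ T.toLinearMap = B :=
    LinearMap.ext_on_range hr fun i => LinearMap.ext_on_range hr fun j => by simp [hT, hgram]
  exact ⟨T, hT, fun u v => DFunLike.congr_fun (DFunLike.congr_fun hform u) v⟩

end GramMatrix

/-! ### Collineations of projective space -/

section Collineations

open Projectivization (orthogonal)
open Projectivization hiding orthogonal
open scoped LinearAlgebra.Projectivization Matrix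

variable {K n : Type*} [Field K] [Fintype n]

variable (K n) in
/-- The permutations of the points of projective space that map hyperplanes to hyperplanes.
Hyperplanes are represented by their normal vectors, so that incidence becomes orthogonality;
`l` is the induced permutation of hyperplanes. -/
def collineations : Subgroup (Equiv.Perm (ℙ K (n → K))) where
  carrier := {k | ∃ l : Equiv.Perm (ℙ K (n → K)),
    ∀ P Q, orthogonal (k P) (l Q) ↔ orthogonal P Q}
  one_mem' := ⟨1, fun _ _ => Iff.rfl⟩
  mul_mem' := by
    rintro k₁ k₂ ⟨l₁, h₁⟩ ⟨l₂, h₂⟩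
    exact ⟨l₁ * l₂, fun P Q => (h₁ _ _).trans (h₂ _ _)⟩
  inv_mem' := by
    rintro k ⟨l, h⟩
    exact ⟨l⁻¹, fun P Q => by simpa using (h (k⁻¹ P) (l⁻¹ Q)).symm⟩

theorem eq_of_forall_orthogonal_imp {P Q : ℙ K (n → K)}
    (h : ∀ R, orthogonal P R → orthogonal Q R) : P = Q := by
  classical
  induction P with | _ v hv
  induction Q with | _ w hw
  obtain ⟨i, hi⟩ := Function.ne_iff.1 hv
  have hi : v i ≠ 0 := hi
  have hminor (j : n) : v i * w j = v j * w i := by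
    rcases eq_or_ne j i with rfl | hj
    · rfl
    have hR : (Pi.single j (v i) - Pi.single i (v j) : n → K) ≠ 0 := fun h0 =>
      hi (by simpa [hj] using congrFun h0 j)
    have hvR := h (mk K _ hR) ((orthogonal_mk hv hR).2 (by simp [dotProduct_sub, mul_comm]))
    rw [orthogonal_mk hw hR] at hvR
    simp only [dotProduct_sub, dotProduct_single] at hvR
    linear_combination hvR
  refine ((mk_eq_mk_iff' K _ _ hw hv).2 ⟨w i / v i, funext fun j => ?_⟩).symm
  rw [Pi.smul_apply, smul_eq_mul, div_mul_eq_mul_div, div_eq_iff hi]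
  linear_combination -hminor j

theorem eq_one_of_forall_orthogonal_iff {l : Equiv.Perm (ℙ K (n → K))}
    (h : ∀ P Q, orthogonal P (l Q) ↔ orthogonal P Q) : l = 1 :=
  Equiv.ext fun Q => eq_of_forall_orthogonal_imp fun R hR =>
    orthogonal_comm.1 ((h R Q).1 (orthogonal_comm.1 hR))

/-- The point `[1 : ⋯ : 1]`, which completes the coordinate simplex to a projective frame. -/
def unitPoint (K n : Type*) [Field K] [Nonempty n] : ℙ K (n → K) := mk K 1 one_ne_zero

theorem orthogonal_unitPoint_mk [Nonempty n] {w : n → K} (hw : w ≠ 0) :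
    orthogonal (unitPoint K n) (mk K w hw) ↔ ∑ i, w i = 0 := by
  rw [unitPoint, orthogonal_mk, one_dotProduct]

variable [DecidableEq n]

/-- The matrix acting on normal vectors of hyperplanes when `g` acts on points. -/
def contragredient (g : GL n K) : GL n K where
  val := (g⁻¹).valᵀ
  inv := g.valᵀ
  val_inv := by rw [← Matrix.transpose_mul, ← Units.val_mul, mul_inv_cancel]; simp
  inv_val := by rw [← Matrix.transpose_mul, ← Units.val_mul, inv_mul_cancel]; simp

theorem orthogonal_smul_contragredient_smul (g : GL n K) (P Q : ℙ K (n → K)) :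
    orthogonal (g • P) (contragredient g • Q) ↔ orthogonal P Q := by
  induction P with | _ v hv
  induction Q with | _ w hw
  rw [smul_mk, smul_mk, orthogonal_mk, orthogonal_mk]
  change g.val *ᵥ v ⬝ᵥ g⁻¹.valᵀ *ᵥ w = 0 ↔ _
  rw [Matrix.mulVec_transpose, dotProduct_comm, ← Matrix.dotProduct_mulVec,
    Matrix.mulVec_mulVec, ← Units.val_mul, inv_mul_cancel, Units.val_one, Matrix.one_mulVec,
    dotProduct_comm]

theorem toPermHom_mem_collineations (g : GL n K) :
    MulAction.toPermHom (GL n K) (ℙ K (n → K)) g ∈ collineations K n :=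
  ⟨MulAction.toPermHom (GL n K) (ℙ K (n → K)) (contragredient g),
    orthogonal_smul_contragredient_smul g⟩

theorem ker_toPermHom_projectivization :
    (MulAction.toPermHom (GL n K) (ℙ K (n → K))).ker = Subgroup.center (GL n K) := by
  ext g
  rw [Matrix.GeneralLinearGroup.mem_center_iff_val_mem_range_scalar, MonoidHom.mem_ker,
    Equiv.Perm.ext_iff]
  refine ⟨fun hg => ?_, fun ⟨a, ha⟩ P => ?_⟩
  · obtain ⟨a, ha⟩ := (Matrix.toLin' g.val).exists_eq_smul_id_of_forall_notLinearIndependent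
      fun v => by
        by_cases hv : v = 0
        · simp [hv, linearIndependent_fin2]
        · obtain ⟨b, hb⟩ := (mk_eq_mk_iff' K _ _ _ hv).1 (hg (.mk K v hv))
          exact fun h => (LinearIndependent.pair_iff' hv).1 h b hb
    refine ⟨a, Matrix.toLin'.injective (ha.symm ▸ LinearMap.ext fun v => ?_)⟩
    simp
  · induction P with | _ v hv
    refine (mk_eq_mk_iff' K _ _ _ hv).2 ⟨a, ?_⟩
    change _ = g.val *ᵥ v
    simp [← ha]

/-- The `i`-th vertex `[e_i]` of the coordinate simplex. -/
def coordPoint (K : Type*) {n : Type*} [Field K] [DecidableEq n] (i : n) : ℙ K (n → K) :=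
  mk K (Pi.single i 1) (by simp)

theorem orthogonal_coordPoint_mk {i : n} {w : n → K} (hw : w ≠ 0) :
    orthogonal (coordPoint K i) (mk K w hw) ↔ w i = 0 := by
  rw [coordPoint, orthogonal_mk, single_one_dotProduct]

theorem exists_not_orthogonal_coordPoint (Q : ℙ K (n → K)) :
    ∃ i, ¬ orthogonal (coordPoint K i) Q := by
  induction Q with | _ w hw
  simpa only [orthogonal_coordPoint_mk] using! Function.ne_iff.1 hw

theorem not_orthogonal_unitPoint [Nonempty n] {i : n} {Q : ℙ K (n → K)}
    (h : ∀ j ≠ i, orthogonal (coordPoint K j) Q) : ¬ orthogonal (unitPoint K n) Q := by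
  induction Q with | _ w hw
  simp only [orthogonal_coordPoint_mk] at h
  rw [orthogonal_unitPoint_mk, Fintype.sum_eq_single i h]
  exact fun hi => hw (funext fun j => (eq_or_ne j i).elim (fun hj => hj ▸ hi) (h j))

theorem det_of_rep_coordPoint_ne_zero {k l : Equiv.Perm (ℙ K (n → K))}
    (h : ∀ P Q, orthogonal (k P) (l Q) ↔ orthogonal P Q) :
    (Matrix.of fun i j => (k (coordPoint K j)).rep i).det ≠ 0 := by
  intro hdet
  obtain ⟨w, hw, hwB⟩ := Matrix.exists_vecMul_eq_zero_iff.2 hdet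
  obtain ⟨j, hj⟩ := exists_not_orthogonal_coordPoint (l.symm (mk K w hw))
  refine hj ((h _ _).1 ?_)
  rw [Equiv.apply_symm_apply, ← mk_rep (k _), orthogonal_mk, dotProduct_comm]
  exact congrFun hwB j

theorem exists_smul_frame_eq [Nonempty n] {k l : Equiv.Perm (ℙ K (n → K))}
    (h : ∀ P Q, orthogonal (k P) (l Q) ↔ orthogonal P Q) :
    ∃ A : GL n K, (∀ i, A • coordPoint K i = k (coordPoint K i)) ∧
      A • unitPoint K n = k (unitPoint K n) := by
  set B : Matrix n n K := Matrix.of fun i j => (k (coordPoint K j)).rep i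
  have hB : IsUnit B.det := (det_of_rep_coordPoint_ne_zero h).isUnit
  set c : n → K := B⁻¹ *ᵥ (k (unitPoint K n)).rep with hc
  have hc0 (i : n) : c i ≠ 0 := by
    have hrow : B⁻¹ i ≠ 0 := fun h0 => by
      simpa [Matrix.mul_apply, h0] using congrFun₂ (Matrix.nonsing_inv_mul B hB) i i
    have horth (j : n) (hj : j ≠ i) : orthogonal (coordPoint K j) (l.symm (mk K _ hrow)) := by
      rw [← h, Equiv.apply_symm_apply, ← mk_rep (k _), orthogonal_mk, dotProduct_comm]
      simpa [hj.symm] using! congrFun₂ (Matrix.nonsing_inv_mul B hB) i j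
    intro hci
    refine not_orthogonal_unitPoint horth ?_
    rwa [← h, Equiv.apply_symm_apply, ← mk_rep (k _), orthogonal_mk, dotProduct_comm]
  have hdet : (B * Matrix.diagonal c).det ≠ 0 := by
    simpa [Finset.prod_eq_zero_iff, hc0] using hB.ne_zero
  refine ⟨.mkOfDetNeZero _ hdet, fun i => ?_, ?_⟩
  · rw [← mk_rep (k _)]
    refine (mk_eq_mk_iff' K _ _ _ _).2 ⟨c i, ?_⟩
    change _ = (B * Matrix.diagonal c) *ᵥ Pi.single i 1
    ext j
    simp [B, mul_comm]
  · rw [← mk_rep (k _)]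
    refine (mk_eq_mk_iff' K _ _ _ _).2 ⟨1, ?_⟩
    change _ = (B * Matrix.diagonal c) *ᵥ 1
    have hdiag : Matrix.diagonal c *ᵥ 1 = c := by ext; simp [Matrix.mulVec_diagonal]
    rw [← Matrix.mulVec_mulVec, hdiag, hc, Matrix.mulVec_mulVec, Matrix.mul_nonsing_inv B hB,
      Matrix.one_mulVec, one_smul]

theorem eq_coordPoint_of_orthogonal {i : n} {Q : ℙ K (n → K)}
    (h : ∀ j ≠ i, orthogonal (coordPoint K j) Q) : Q = coordPoint K i := by
  induction Q with | _ w hw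
  simp only [orthogonal_coordPoint_mk] at h
  refine (mk_eq_mk_iff' K _ _ _ _).2 ⟨w i, funext fun j => ?_⟩
  rcases eq_or_ne j i with rfl | hj
  · simp
  · simp [hj, h j hj]

variable (K) in
/-- The normal vector of the hyperplane `x_i = x_j`. -/
def diffPoint {i j : n} (hij : i ≠ j) : ℙ K (n → K) :=
  mk K (Pi.single i 1 - Pi.single j 1) fun h => by simpa [hij] using congrFun h i

theorem orthogonal_mk_diffPoint {i j : n} (hij : i ≠ j) {v : n → K} (hv : v ≠ 0) :
    orthogonal (mk K v hv) (diffPoint K hij) ↔ v i = v j := by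
  rw [diffPoint, orthogonal_mk]
  simp [dotProduct_sub, sub_eq_zero]

theorem eq_diffPoint_of_orthogonal [Nonempty n] {i j : n} (hij : i ≠ j) {Q : ℙ K (n → K)}
    (h : ∀ m, m ≠ i → m ≠ j → orthogonal (coordPoint K m) Q)
    (hQ : orthogonal (unitPoint K n) Q) : Q = diffPoint K hij := by
  induction Q with | _ w hw
  simp only [orthogonal_coordPoint_mk] at h
  rw [orthogonal_unitPoint_mk, Fintype.sum_eq_add i j hij fun m hm => h m hm.1 hm.2] at hQ
  refine (mk_eq_mk_iff' K _ _ _ _).2 ⟨w i, funext fun m => ?_⟩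
  rcases eq_or_ne m i with rfl | hmi
  · simp [hij]
  rcases eq_or_ne m j with rfl | hmj
  · simpa [hmi] using (eq_neg_of_add_eq_zero_right hQ).symm
  · simp [hmi, hmj, h m hmi hmj]

theorem orthogonal_coordPoint_iff_of_fixes_coordPoint {k l : Equiv.Perm (ℙ K (n → K))}
    (h : ∀ P Q, orthogonal (k P) (l Q) ↔ orthogonal P Q)
    (hk : ∀ i, k (coordPoint K i) = coordPoint K i) (P : ℙ K (n → K)) (i : n) :
    orthogonal (coordPoint K i) (k P) ↔ orthogonal (coordPoint K i) P := by
  have hl : l (coordPoint K i) = coordPoint K i := eq_coordPoint_of_orthogonal fun j hj => by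
    rw [← hk j, h, coordPoint, coordPoint, orthogonal_mk]
    simp [hj]
  rw [orthogonal_comm, orthogonal_comm (v := coordPoint K i), ← h P, hl]

theorem orthogonal_diffPoint_iff_of_fixes_frame [Nonempty n] {k l : Equiv.Perm (ℙ K (n → K))}
    (h : ∀ P Q, orthogonal (k P) (l Q) ↔ orthogonal P Q)
    (hk : ∀ i, k (coordPoint K i) = coordPoint K i) (hk₁ : k (unitPoint K n) = unitPoint K n)
    (P : ℙ K (n → K)) {i j : n} (hij : i ≠ j) :
    orthogonal (k P) (diffPoint K hij) ↔ orthogonal P (diffPoint K hij) := by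
  have hl : l (diffPoint K hij) = diffPoint K hij := by
    refine eq_diffPoint_of_orthogonal hij (fun m hmi hmj => ?_) ?_
    · rw [← hk m, h, diffPoint, orthogonal_coordPoint_mk]
      simp [hmi, hmj]
    · rw [← hk₁, h, diffPoint, orthogonal_unitPoint_mk]
      simp
  rw [← h P, hl]

theorem eq_one_of_fixes_frame [Nonempty n] {k l : Equiv.Perm (ℙ (ZMod 3) (n → ZMod 3))}
    (h : ∀ P Q, orthogonal (k P) (l Q) ↔ orthogonal P Q)
    (hk : ∀ i, k (coordPoint (ZMod 3) i) = coordPoint (ZMod 3) i)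
    (hk₁ : k (unitPoint (ZMod 3) n) = unitPoint (ZMod 3) n) : k = 1 := by
  refine Equiv.ext fun P => ?_
  have hzero := orthogonal_coordPoint_iff_of_fixes_coordPoint h hk P
  have heq {i j : n} := orthogonal_diffPoint_iff_of_fixes_frame h hk hk₁ P (i := i) (j := j)
  rw [Equiv.Perm.one_apply]
  induction P with | _ v hv
  generalize k (mk _ v hv) = Q at hzero heq ⊢
  induction Q with | _ w hw
  simp only [orthogonal_coordPoint_mk, orthogonal_mk_diffPoint] at hzero heq
  obtain ⟨i, hi⟩ := Function.ne_iff.1 hv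
  -- A vector over `𝔽₃` is determined up to sign by which coordinates vanish and which coincide.
  have proportional : ∀ a b c d : ZMod 3, a ≠ 0 → (b = 0 ↔ a = 0) → (d = 0 ↔ c = 0) →
      (b = d ↔ a = c) → b * a * c = d := by decide
  refine (mk_eq_mk_iff' _ _ _ hw hv).2 ⟨w i * v i, funext fun j => ?_⟩
  refine proportional _ _ _ _ hi (hzero i) (hzero j) ?_
  rcases eq_or_ne i j with rfl | hij
  · simp
  · exact heq hij

theorem range_toPermHom_projectivization_zmod_three [Nonempty n] :
    (MulAction.toPermHom (GL n (ZMod 3)) (ℙ (ZMod 3) (n → ZMod 3))).range =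
      collineations (ZMod 3) n := by
  refine le_antisymm ?_ fun k ⟨l, h⟩ => ?_
  · rintro _ ⟨g, rfl⟩
    exact toPermHom_mem_collineations g
  obtain ⟨A, hA, hA₁⟩ := exists_smul_frame_eq h
  set g := MulAction.toPermHom (GL n (ZMod 3)) (ℙ (ZMod 3) (n → ZMod 3)) A
  obtain ⟨l', h'⟩ := mul_mem (inv_mem (toPermHom_mem_collineations A)) ⟨l, h⟩
  have hone : g⁻¹ * k = 1 := by
    refine eq_one_of_fixes_frame h' (fun i => ?_) ?_
    · rw [Equiv.Perm.mul_apply, Equiv.Perm.inv_eq_iff_eq, ← hA i]; rfl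
    · rw [Equiv.Perm.mul_apply, Equiv.Perm.inv_eq_iff_eq, ← hA₁]; rfl
  exact ⟨A, inv_mul_eq_one.1 hone⟩

variable (n) in
/-- The fundamental theorem of projective geometry over `𝔽₃`, which has no nontrivial field
automorphisms. -/
def projectiveGeneralLinearGroupEquivCollineations [Nonempty n] :
    (GL n (ZMod 3) ⧸ Subgroup.center (GL n (ZMod 3))) ≃* collineations (ZMod 3) n :=
  (QuotientGroup.quotientMulEquivOfEq ker_toPermHom_projectivization.symm).trans <|
    (QuotientGroup.quotientKerEquivRange _).trans <|
      MulEquiv.subgroupCongr range_toPermHom_projectivization_zmod_three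

instance isPretransitive_generalLinearGroup_projectivization :
    MulAction.IsPretransitive (GL n K) (ℙ K (n → K)) :=
  ⟨fun P Q =>
    let ⟨g, hg⟩ := MulAction.exists_smul_eq (Matrix.SpecialLinearGroup n K) P Q
    ⟨g, hg⟩⟩

end Collineations

/-! ### The Eisenstein integers and their residue field `𝔽₃` -/

theorem isPrimitiveRoot_ω : IsPrimitiveRoot ω 3 := Complex.isPrimitiveRoot_exp 3 three_ne_zero

theorem ω_sq : ω ^ 2 = -1 - ω := by
  have h : ∑ i ∈ Finset.range 3, ω ^ i = 0 := isPrimitiveRoot_ω.geom_sum_eq_zero (by norm_num)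
  simp only [Finset.sum_range_succ, Finset.sum_range_zero] at h
  linear_combination h

theorem norm_ω : ‖ω‖ = 1 := isPrimitiveRoot_ω.norm'_eq_one three_ne_zero

theorem ω_ne_zero : ω ≠ 0 := isPrimitiveRoot_ω.ne_zero three_ne_zero

theorem conj_ω : conj ω = -1 - ω := by
  rw [← Complex.inv_eq_conj norm_ω, ← ω_sq]
  exact inv_eq_of_mul_eq_one_right (by linear_combination isPrimitiveRoot_ω.pow_eq_one)

theorem θ_eq : θ = 1 + 2 * ω := by
  rw [θ, conj_ω]
  ring

theorem θ_sq : θ ^ 2 = -3 := by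
  rw [θ_eq]
  linear_combination 4 * ω_sq

theorem θ_ne_zero : θ ≠ 0 := fun h => by simpa [h] using θ_sq

theorem norm_θ : ‖θ‖ = √3 := by
  rw [eq_comm, Real.sqrt_eq_iff_eq_sq (by norm_num) (norm_nonneg θ), ← norm_pow, θ_sq]
  simp

theorem qc_eq : qc = -1 + ω := by
  rw [qc, θ_eq, ω_sq]
  linear_combination 2 * ω_sq

theorem orderOf_neg_ω : orderOf (-ω) = 6 := by
  have h2 : orderOf (-1 : ℂ) = 2 := by simp [orderOf_neg_one, ringChar.eq_zero]
  have h3 : orderOf ω = 3 := isPrimitiveRoot_ω.eq_orderOf.symm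
  have hcop : (orderOf (-1 : ℂ)).Coprime (orderOf ω) := by rw [h2, h3]; norm_num
  rw [neg_eq_neg_one_mul, (Commute.all _ _).orderOf_mul_eq_mul_orderOf_of_coprime hcop, h2, h3]

theorem EisUnit.exists_neg_ω_pow_eq {u : ℂ} (hu : EisUnit u) : ∃ m : ℕ, (-ω) ^ m = u := by
  have h3 : ω ^ 3 = 1 := isPrimitiveRoot_ω.pow_eq_one
  rcases hu with rfl | rfl | rfl | rfl | rfl | rfl
  · exact ⟨0, by ring⟩
  · exact ⟨3, by linear_combination -h3⟩
  · exact ⟨4, by linear_combination ω * h3⟩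
  · exact ⟨1, by ring⟩
  · exact ⟨2, by ring⟩
  · exact ⟨5, by linear_combination -ω ^ 2 * h3⟩

/-- The ring `ℤ[ω]` with decidable arithmetic: `⟨a, b⟩` stands for `a + b ω`. -/
abbrev Eis : Type := QuadraticAlgebra ℤ (-1) (-1)

instance : Algebra Eis ℂ :=
  (QuadraticAlgebra.lift (R := ℤ) (a := -1) (b := -1)
    ⟨ω, by linear_combination ω_sq⟩).toRingHom.toAlgebra

theorem algebraMap_eis_apply (z : Eis) : algebraMap Eis ℂ z = z.re + z.im * ω := by
  change (z.re • 1 + z.im • ω : ℂ) = _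
  simp

theorem algebraMap_eis_injective : Function.Injective (algebraMap Eis ℂ) := by
  refine (injective_iff_map_eq_zero _).2 fun z hz => ?_
  have hθ : (z.im : ℂ) * θ = 0 := by
    have hconj := congrArg conj hz
    simp only [algebraMap_eis_apply, map_add, map_mul, map_intCast, map_zero] at hz hconj
    rw [θ]
    linear_combination hz - hconj
  have him : z.im = 0 := by simpa [θ_ne_zero] using hθ
  rw [algebraMap_eis_apply, him] at hz
  exact QuadraticAlgebra.ext (by simpa using hz) him

theorem algebraMap_eis_star (z : Eis) : algebraMap Eis ℂ (star z) = conj (algebraMap Eis ℂ z) := by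
  simp only [algebraMap_eis_apply, QuadraticAlgebra.re_star, QuadraticAlgebra.im_star, map_add,
    map_mul, map_intCast, conj_ω]
  push_cast
  ring

theorem eisP_iff_mem_range {z : ℂ} : EisP z ↔ z ∈ Set.range (algebraMap Eis ℂ) :=
  ⟨fun ⟨a, b, h⟩ => ⟨⟨a, b⟩, (algebraMap_eis_apply _).trans h.symm⟩,
    fun ⟨z, h⟩ => ⟨z.re, z.im, h ▸ algebraMap_eis_apply z⟩⟩

/-- `√-3` as an element of `ℤ[ω]`. -/
def thetaEis : Eis := ⟨1, 2⟩

theorem algebraMap_thetaEis : algebraMap Eis ℂ thetaEis = θ := by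
  simp [algebraMap_eis_apply, thetaEis, θ_eq]

/-- Reduction of `ℤ[ω]` modulo the prime `θ`, which sends `ω` to `1`. -/
def residue : Eis →ₐ[ℤ] ZMod 3 := QuadraticAlgebra.lift ⟨1, by decide⟩

theorem residue_apply (z : Eis) : residue z = z.re + z.im := by
  change (z.re • 1 + z.im • 1 : ZMod 3) = _
  simp

theorem residue_eq_zero_iff {z : Eis} : residue z = 0 ↔ thetaEis ∣ z := by
  constructor
  · intro h
    rw [residue_apply, ← Int.cast_add, ZMod.intCast_zmod_eq_zero_iff_dvd] at h
    obtain ⟨c, hc⟩ := h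
    refine ⟨⟨z.im - c, z.im - 2 * c⟩, QuadraticAlgebra.ext ?_ ?_⟩ <;>
      simp only [thetaEis, QuadraticAlgebra.re_mul, QuadraticAlgebra.im_mul] <;> grind
  · rintro ⟨y, rfl⟩
    rw [map_mul, residue_apply thetaEis]
    exact mul_eq_zero_of_left (by decide) _

theorem exists_sub_intCast_eq_θ_mul_iff (z : Eis) (m : ℤ) :
    (∃ a b : ℤ, algebraMap Eis ℂ z - m = θ * (a + b * ω)) ↔ residue z = m := by
  have hres : residue z = m ↔ thetaEis ∣ z - m := by
    rw [← residue_eq_zero_iff, map_sub, sub_eq_zero, map_intCast]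
  rw [hres]
  constructor
  · rintro ⟨a, b, h⟩
    refine ⟨⟨a, b⟩, algebraMap_eis_injective ?_⟩
    rw [map_sub, map_intCast, h, map_mul, algebraMap_thetaEis, algebraMap_eis_apply]
  · rintro ⟨y, h⟩
    refine ⟨y.re, y.im, ?_⟩
    rw [← algebraMap_eis_apply, ← algebraMap_thetaEis, ← map_mul, ← h, map_sub, map_intCast]

theorem inE8_algebraMap_iff (u : Fin 4 → Eis) :
    inE8 (fun i => algebraMap Eis ℂ (u i)) ↔
      ∃ s t : ZMod 3, ∀ i, residue (u i) = tet1 i * s + tet2 i * t := by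
  constructor
  · rintro ⟨-, s, t, h⟩
    refine ⟨s, t, fun i => ?_⟩
    simpa using (exists_sub_intCast_eq_θ_mul_iff (u i) _).1 (h i)
  · rintro ⟨s, t, h⟩
    obtain ⟨s, rfl⟩ := ZMod.intCast_surjective s
    obtain ⟨t, rfl⟩ := ZMod.intCast_surjective t
    refine ⟨fun i => eisP_iff_mem_range.2 ⟨_, rfl⟩, s, t, fun i => ?_⟩
    exact (exists_sub_intCast_eq_θ_mul_iff (u i) _).2 (by simpa using h i)

/-! ### The roots generate the lattice -/

/-- The coordinates in `ℤ[ω]` of the point roots `pt`. -/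
def ptEis : Fin 13 → Fin 14 → Eis :=
  let w : Eis := ⟨0, 1⟩
  let w' : Eis := ⟨-1, -1⟩
  let q : Eis := ⟨-1, 1⟩
  ![![0, 0, 0, 0, 0, 0, 0, 0, 0, 0, 0, 0, 1, w'],
    ![q, 0, 0, 0, 0, 0, 0, 0, 0, 0, 0, 0, 0, 0],
    ![0, 0, 0, 0, q, 0, 0, 0, 0, 0, 0, 0, 0, 0],
    ![0, 0, 0, 0, 0, 0, 0, 0, q, 0, 0, 0, 0, 0],
    ![0, q, 0, 0, 0, 0, 0, 0, 0, 0, 0, 0, 0, 0],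
    ![0, 0, 0, 0, 0, q, 0, 0, 0, 0, 0, 0, 0, 0],
    ![0, 0, 0, 0, 0, 0, 0, 0, 0, q, 0, 0, 0, 0],
    ![0, 0, 0, 0, 0, 0, 0, q, 0, 0, 0, q, w, w'],
    ![0, 0, 0, q, 0, 0, 0, 0, 0, 0, 0, q, w, w'],
    ![0, 0, 0, q, 0, 0, 0, q, 0, 0, 0, 0, w, w'],
    ![0, 0, 0, q, 0, 0, -q, q, 0, 0, -q, q, 2 * w, 2 * w'],
    ![0, 0, -q, q, 0, 0, 0, q, 0, 0, -q, q, 2 * w, 2 * w'],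
    ![0, 0, -q, q, 0, 0, -q, q, 0, 0, 0, q, 2 * w, 2 * w']]

/-- The coordinates in `ℤ[ω]` of the line roots `lnr`. -/
def lnEis : Fin 13 → Fin 14 → Eis :=
  let q : Eis := ⟨-1, 1⟩
  ![![0, 1, 1, -2, 0, 1, 1, -2, 0, 1, 1, -2, ⟨-2, 1⟩, -thetaEis],
    ![1, 0, 1, -1, 0, 0, 0, 0, 0, 0, 0, 0, -1, 0],
    ![0, 0, 0, 0, 1, 0, 1, -1, 0, 0, 0, 0, -1, 0],
    ![0, 0, 0, 0, 0, 0, 0, 0, 1, 0, 1, -1, -1, 0],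
    ![1, 1, -1, 0, 0, 0, 0, 0, 0, 0, 0, 0, 0, 0],
    ![0, 0, 0, 0, 1, 1, -1, 0, 0, 0, 0, 0, 0, 0],
    ![0, 0, 0, 0, 0, 0, 0, 0, 1, 1, -1, 0, 0, 0],
    ![0, 1, 1, 1, 0, 0, 0, 0, 0, 0, 0, 0, 0, 0],
    ![0, 0, 0, 0, 0, 1, 1, 1, 0, 0, 0, 0, 0, 0],
    ![0, 0, 0, 0, 0, 0, 0, 0, 0, 1, 1, 1, 0, 0],
    ![0, 1, 1, -2, 1, 0, 1, -1, 1, 0, 1, -1, q, -thetaEis],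
    ![1, 0, 1, -1, 0, 1, 1, -2, 1, 0, 1, -1, q, -thetaEis],
    ![1, 0, 1, -1, 1, 0, 1, -1, 0, 1, 1, -2, q, -thetaEis]]

/-- The inclusion `ℤ[ω]¹⁴ ⊆ ℂ¹⁴`. -/
def eisEmbed : (Fin 14 → Eis) →ₗ[Eis] V := (Algebra.linearMap Eis ℂ).compLeft (Fin 14)

theorem eisEmbed_apply (u : Fin 14 → Eis) (j : Fin 14) :
    eisEmbed u j = algebraMap Eis ℂ (u j) := rfl

open scoped QuadraticAlgebra in
theorem eisEmbed_ptEis (i : Fin 13) : eisEmbed (ptEis i) = pt i := by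
  ext j
  rw [eisEmbed_apply, algebraMap_eis_apply]
  fin_cases i <;> fin_cases j <;>
    simp [ptEis, pt, rA, rC1, rC2, rC3, rE1, rE2, rE3, rA1, rA2, rA3, rG1, rG2, rG3, qc_eq, ω_sq]
  all_goals ring

open scoped QuadraticAlgebra in
theorem eisEmbed_lnEis (i : Fin 13) : eisEmbed (lnEis i) = lnr i := by
  ext j
  rw [eisEmbed_apply, algebraMap_eis_apply]
  fin_cases i <;> fin_cases j <;>
    simp [lnEis, lnr, rF, rB1, rB2, rB3, rD1, rD2, rD3, rF1, rF2, rF3, rZ1, rZ2, rZ3, qc_eq,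
      thetaEis, θ_eq]
  all_goals ring

/-- The `i`-th coordinate of the `k`-th copy of `E₈` in `3E₈ ⊕ H`. -/
def blockCoord (k : Fin 3) (i : Fin 4) : Fin 14 := ⟨4 * (k : ℕ) + (i : ℕ), by omega⟩

theorem eq_blockCoord_or_eq (j : Fin 14) : (∃ k i, j = blockCoord k i) ∨ j = 12 ∨ j = 13 := by
  revert j
  decide

/-- The lattice `L` in the coordinates of `ℤ[ω]¹⁴`. -/
def eisLattice : Submodule Eis (Fin 14 → Eis) where
  carrier := {u | ∀ k, ∃ s t : ZMod 3, ∀ i, residue (u (blockCoord k i)) = tet1 i * s + tet2 i * t}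
  zero_mem' _ := ⟨0, 0, fun _ => by simp⟩
  add_mem' hu hv k := by
    obtain ⟨s, t, hu⟩ := hu k
    obtain ⟨s', t', hv⟩ := hv k
    refine ⟨s + s', t + t', fun i => ?_⟩
    rw [Pi.add_apply, map_add, hu, hv]
    ring
  smul_mem' c u hu k := by
    obtain ⟨s, t, hu⟩ := hu k
    refine ⟨residue c * s, residue c * t, fun i => ?_⟩
    rw [Pi.smul_apply, smul_eq_mul, map_mul, hu]
    ring

theorem Lset_eq_image_eisLattice : Lset = eisEmbed '' eisLattice := by
  ext v
  constructor
  · rintro ⟨hblock, h12, h13⟩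
    have hcoord (j : Fin 14) : ∃ z, algebraMap Eis ℂ z = v j := by
      rcases eq_blockCoord_or_eq j with ⟨k, i, rfl⟩ | rfl | rfl
      exacts [eisP_iff_mem_range.1 ((hblock k).1 i), eisP_iff_mem_range.1 h12,
        eisP_iff_mem_range.1 h13]
    choose u hu using hcoord
    obtain rfl : eisEmbed u = v := funext hu
    exact ⟨u, fun k => (inE8_algebraMap_iff _).1 (hblock k), rfl⟩
  · rintro ⟨u, hu, rfl⟩
    exact ⟨fun k => (inE8_algebraMap_iff _).2 (hu k), eisP_iff_mem_range.2 ⟨_, rfl⟩,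
      eisP_iff_mem_range.2 ⟨_, rfl⟩⟩

/-- The `ℤ[ω]`-span of the 26 roots. -/
def rootSpan : Submodule Eis (Fin 14 → Eis) :=
  Submodule.span Eis (Set.range ptEis ∪ Set.range lnEis)

theorem ptEis_mem_rootSpan (i : Fin 13) : ptEis i ∈ rootSpan :=
  Submodule.subset_span (Or.inl ⟨i, rfl⟩)

theorem lnEis_mem_rootSpan (i : Fin 13) : lnEis i ∈ rootSpan :=
  Submodule.subset_span (Or.inr ⟨i, rfl⟩)

theorem rootSpan_le_eisLattice : rootSpan ≤ eisLattice := by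
  refine Submodule.span_le.2 (Set.union_subset ?_ ?_) <;> rintro _ ⟨i, rfl⟩
  · change ∀ k, ∃ s t : ZMod 3, ∀ l,
      residue (ptEis i (blockCoord k l)) = tet1 l * s + tet2 l * t
    revert i
    decide +kernel
  · change ∀ k, ∃ s t : ZMod 3, ∀ l,
      residue (lnEis i (blockCoord k l)) = tet1 l * s + tet2 l * t
    revert i
    decide +kernel

theorem single_blockCoord_thetaEis_mem_rootSpan (k : Fin 3) (i : Fin 4) :
    Pi.single (blockCoord k i) thetaEis ∈ rootSpan := by
  have e0 : ∀ k, Pi.single (blockCoord k 0) thetaEis = (⟨0, -1⟩ : Eis) • ptEis (![1, 2, 3] k) := by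
    decide +kernel
  have e1 : ∀ k, Pi.single (blockCoord k 1) thetaEis = (⟨0, -1⟩ : Eis) • ptEis (![4, 5, 6] k) := by
    decide +kernel
  have e2 : ∀ k, Pi.single (blockCoord k 2) thetaEis = Pi.single (blockCoord k 0) thetaEis +
      Pi.single (blockCoord k 1) thetaEis - thetaEis • lnEis (![4, 5, 6] k) := by
    decide +kernel
  have e3 : ∀ k, Pi.single (blockCoord k 3) thetaEis = thetaEis • lnEis (![7, 8, 9] k) -
      Pi.single (blockCoord k 1) thetaEis - Pi.single (blockCoord k 2) thetaEis := by
    decide +kernel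
  have h0 : Pi.single (blockCoord k 0) thetaEis ∈ rootSpan :=
    e0 k ▸ Submodule.smul_mem _ _ (ptEis_mem_rootSpan _)
  have h1 : Pi.single (blockCoord k 1) thetaEis ∈ rootSpan :=
    e1 k ▸ Submodule.smul_mem _ _ (ptEis_mem_rootSpan _)
  have h2 : Pi.single (blockCoord k 2) thetaEis ∈ rootSpan :=
    e2 k ▸ sub_mem (add_mem h0 h1) (Submodule.smul_mem _ _ (lnEis_mem_rootSpan _))
  have h3 : Pi.single (blockCoord k 3) thetaEis ∈ rootSpan :=
    e3 k ▸ sub_mem (sub_mem (Submodule.smul_mem _ _ (lnEis_mem_rootSpan _)) h1) h2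
  fin_cases i
  exacts [h0, h1, h2, h3]

theorem single_twelve_one_mem_rootSpan : Pi.single 12 1 ∈ rootSpan := by
  have h : (Pi.single 12 1 : Fin 14 → Eis) = lnEis 4 - lnEis 7 -
      thetaEis • Pi.single (blockCoord 0 2) thetaEis - lnEis 1 := by decide +kernel
  rw [h]
  exact sub_mem (sub_mem (sub_mem (lnEis_mem_rootSpan 4) (lnEis_mem_rootSpan 7))
    (Submodule.smul_mem _ _ (single_blockCoord_thetaEis_mem_rootSpan 0 2))) (lnEis_mem_rootSpan 1)

theorem single_thirteen_one_mem_rootSpan : Pi.single 13 1 ∈ rootSpan := by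
  have h : (Pi.single 13 1 : Fin 14 → Eis) = (⟨0, 1⟩ : Eis) • (ptEis 0 - Pi.single 12 1) := by
    decide +kernel
  rw [h]
  exact Submodule.smul_mem _ _ (sub_mem (ptEis_mem_rootSpan 0) single_twelve_one_mem_rootSpan)

theorem mem_rootSpan_of_residue_eq_zero {u : Fin 14 → Eis}
    (hu : ∀ k i, residue (u (blockCoord k i)) = 0) : u ∈ rootSpan := by
  rw [← Finset.univ_sum_single u]
  refine sum_mem fun j _ => ?_
  rcases eq_blockCoord_or_eq j with ⟨k, i, rfl⟩ | rfl | rfl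
  · obtain ⟨c, hc⟩ := residue_eq_zero_iff.1 (hu k i)
    rw [hc, mul_comm, ← smul_eq_mul, Pi.single_smul]
    exact Submodule.smul_mem _ _ (single_blockCoord_thetaEis_mem_rootSpan k i)
  · rw [← mul_one (u 12), ← smul_eq_mul, Pi.single_smul]
    exact Submodule.smul_mem _ _ single_twelve_one_mem_rootSpan
  · rw [← mul_one (u 13), ← smul_eq_mul, Pi.single_smul]
    exact Submodule.smul_mem _ _ single_thirteen_one_mem_rootSpan

theorem exists_mem_rootSpan_residue_eq (s t : Fin 3 → ZMod 3) :
    ∃ d ∈ rootSpan, ∀ k i, residue (d (blockCoord k i)) = tet1 i * s k + tet2 i * t k := by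
  have hD (l k : Fin 3) (i : Fin 4) :
      residue (lnEis (![4, 5, 6] l) (blockCoord k i)) = if k = l then (tet1 i : ZMod 3) else 0 := by
    revert l k i
    decide +kernel
  have hF (l k : Fin 3) (i : Fin 4) :
      residue (lnEis (![7, 8, 9] l) (blockCoord k i)) = if k = l then (tet2 i : ZMod 3) else 0 := by
    revert l k i
    decide +kernel
  choose s' hs using fun k => ZMod.intCast_surjective (s k)
  choose t' ht using fun k => ZMod.intCast_surjective (t k)
  refine ⟨∑ l, (s' l • lnEis (![4, 5, 6] l) + t' l • lnEis (![7, 8, 9] l)),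
    sum_mem fun l _ => add_mem (zsmul_mem (lnEis_mem_rootSpan _) _)
      (zsmul_mem (lnEis_mem_rootSpan _) _), fun k i => ?_⟩
  simp only [Finset.sum_apply, Pi.add_apply, Pi.smul_apply, map_sum, map_add, map_zsmul, hD, hF]
  simp [Finset.sum_add_distrib, hs, ht, mul_comm]

theorem rootSpan_eq_eisLattice : rootSpan = eisLattice := by
  refine le_antisymm rootSpan_le_eisLattice fun u hu => ?_
  choose s t hst using hu
  obtain ⟨d, hd, hres⟩ := exists_mem_rootSpan_residue_eq s t
  have hdiff : u - d ∈ rootSpan := mem_rootSpan_of_residue_eq_zero fun k i => by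
    rw [Pi.sub_apply, map_sub, hst, hres, sub_self]
  exact (Submodule.sub_mem_iff_left _ hd).1 hdiff

theorem map_eisEmbed_rootSpan : rootSpan.map eisEmbed = Submodule.span Eis D26 := by
  simp only [rootSpan, Submodule.map_span, Set.image_union, ← Set.range_comp, Function.comp_def,
    eisEmbed_ptEis, eisEmbed_lnEis, D26]

theorem Lset_eq_span_D26 : Lset = Submodule.span Eis D26 := by
  rw [Lset_eq_image_eisLattice, ← rootSpan_eq_eisLattice, ← map_eisEmbed_rootSpan,
    Submodule.map_coe]

theorem span_D26_eq_top : Submodule.span ℂ D26 = ⊤ := by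
  have hmem {u : Fin 14 → Eis} (hu : u ∈ rootSpan) : eisEmbed u ∈ Submodule.span ℂ D26 :=
    Submodule.span_le_restrictScalars Eis ℂ D26
      (map_eisEmbed_rootSpan ▸ Submodule.mem_map_of_mem hu)
  have hsingle (j : Fin 14) {z : Eis} (hz : z ≠ 0) (hu : Pi.single j z ∈ rootSpan) (c : ℂ) :
      Pi.single j c ∈ Submodule.span ℂ D26 := by
    have hz' : algebraMap Eis ℂ z ≠ 0 := by
      rwa [Ne, map_eq_zero_iff _ algebraMap_eis_injective]
    have h : (Pi.single j c : V) = (c / algebraMap Eis ℂ z) • eisEmbed (Pi.single j z) := by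
      ext i
      obtain rfl | hij := eq_or_ne i j <;> simp [eisEmbed_apply, *]
    exact h ▸ Submodule.smul_mem _ _ (hmem hu)
  refine (Submodule.eq_top_iff').2 fun v => ?_
  rw [← Finset.univ_sum_single v]
  refine sum_mem fun j _ => ?_
  rcases eq_blockCoord_or_eq j with ⟨k, i, rfl⟩ | rfl | rfl
  · exact hsingle _ (by decide) (single_blockCoord_thetaEis_mem_rootSpan k i) _
  · exact hsingle _ one_ne_zero single_twelve_one_mem_rootSpan _
  · exact hsingle _ one_ne_zero single_thirteen_one_mem_rootSpan _

/-! ### The Hermitian form -/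

/-- `herm` as a sesquilinear map. -/
def hermForm : V →ₗ⋆[ℂ] V →ₗ[ℂ] ℂ :=
  LinearMap.mk₂'ₛₗ (starRingEnd ℂ) (RingHom.id ℂ) herm
    (fun u u' v => by
      simp only [herm, Pi.add_apply, map_add, add_mul, Finset.sum_add_distrib]
      ring)
    (fun c u v => by
      simp only [herm, Pi.smul_apply, smul_eq_mul, map_mul, mul_assoc, ← Finset.mul_sum]
      ring)
    (fun u v v' => by
      simp only [herm, Pi.add_apply, mul_add, Finset.sum_add_distrib]
      ring)
    (fun c u v => by
      simp only [herm, Pi.smul_apply, smul_eq_mul, RingHom.id_apply, mul_left_comm _ c,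
        ← Finset.mul_sum]
      ring)

theorem hermForm_apply (u v : V) : hermForm u v = herm u v := rfl

theorem herm_smul_left (c : ℂ) (u v : V) : herm (c • u) v = conj c * herm u v := by
  simp only [← hermForm_apply, map_smulₛₗ, LinearMap.smul_apply, smul_eq_mul]

theorem herm_smul_right (c : ℂ) (u v : V) : herm u (c • v) = c * herm u v := by
  simp only [← hermForm_apply, map_smul, smul_eq_mul]

theorem conj_herm (u v : V) : conj (herm u v) = herm v u := by
  simp only [herm, map_add, map_neg, map_sum, map_mul, Complex.conj_conj]
  simp only [mul_comm, mul_left_comm]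
  ring

theorem separatingRight_hermForm : hermForm.SeparatingRight := by
  intro v hv
  have hE8 (i : Fin 12) : v (Fin.castLE (by norm_num) i) = 0 := by
    have hi := hv (Pi.single (Fin.castLE (by norm_num) i) 1)
    have h12 : ∀ i : Fin 12, (12 : Fin 14) ≠ Fin.castLE (by norm_num) i := by decide
    have h13 : ∀ i : Fin 12, (13 : Fin 14) ≠ Fin.castLE (by norm_num) i := by decide
    simpa [hermForm_apply, herm, Pi.single_apply, h12, h13, apply_ite conj] using hi
  have h12 : v 12 = 0 := by
    simpa [hermForm_apply, herm, hE8, θ_ne_zero] using hv (Pi.single 13 1)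
  have h13 : v 13 = 0 := by
    simpa [hermForm_apply, herm, hE8, θ_ne_zero] using hv (Pi.single 12 1)
  have hcases : ∀ j : Fin 14, (∃ i : Fin 12, j = Fin.castLE (by norm_num) i) ∨ j = 12 ∨ j = 13 := by
    decide
  ext j
  rcases hcases j with ⟨i, rfl⟩ | rfl | rfl
  exacts [hE8 i, h12, h13]

/-- The form `herm` on `ℤ[ω]¹⁴`. -/
def eisHerm (u v : Fin 14 → Eis) : Eis :=
  -(∑ i : Fin 12, star (u (Fin.castLE (by norm_num) i)) * v (Fin.castLE (by norm_num) i)) +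
    star (u 12) * star thetaEis * v 13 + star (u 13) * thetaEis * v 12

theorem herm_eisEmbed (u v : Fin 14 → Eis) :
    herm (eisEmbed u) (eisEmbed v) = algebraMap Eis ℂ (eisHerm u v) := by
  simp only [herm, eisHerm, eisEmbed_apply, map_add, map_neg, map_sum, map_mul, algebraMap_eis_star,
    algebraMap_thetaEis]

/-! ### Labelling the roots by the points of the projective plane -/

section Labelling

open Projectivization
open scoped LinearAlgebra.Projectivization Matrix

/-- The points of the projective plane `P²(𝔽₃)`. -/
abbrev Point : Type := ℙ (ZMod 3) (Fin 3 → ZMod 3)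

/-- Homogeneous coordinates of the point of `P²(𝔽₃)` that labels the root `pt i`. -/
def pointCoord : Fin 13 → Fin 3 → ZMod 3 :=
  ![![1, 0, 0], ![0, 1, 0], ![0, 0, 1], ![1, 1, 1], ![1, 1, 2], ![1, 2, 1], ![0, 1, 2], ![1, 1, 0],
    ![1, 0, 1], ![0, 1, 1], ![1, 2, 0], ![1, 0, 2], ![1, 2, 2]]

theorem pointCoord_ne_zero (i : Fin 13) : pointCoord i ≠ 0 := by
  revert i
  decide

/-- The labelling of the point roots by the points of `P²(𝔽₃)`. -/
def pointLabel : Fin 13 ≃ Point :=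
  Equiv.ofBijective (fun i => mk (ZMod 3) (pointCoord i) (pointCoord_ne_zero i)) <| by
    constructor
    · intro i j h
      obtain ⟨a, ha⟩ := (mk_eq_mk_iff' _ _ _ _ _).1 h
      have hdistinct : ∀ i j, ∀ a : ZMod 3, a • pointCoord j = pointCoord i → i = j := by decide
      exact hdistinct i j a ha
    · refine ind fun v hv => ?_
      have hcover : ∀ v : Fin 3 → ZMod 3, v ≠ 0 → ∃ i, ∃ a : ZMod 3, a • v = pointCoord i := by
        decide
      obtain ⟨i, hi⟩ := hcover v hv
      exact ⟨i, (mk_eq_mk_iff' _ _ _ _ _).2 hi⟩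

/-- The bijection taking the index of the point root labelled `[a : b : c]` to the index of the
line root labelled by the line `a X + b Y + c Z = 0`. -/
def polarity : Equiv.Perm (Fin 13) where
  toFun := ![12, 2, 1, 6, 7, 8, 3, 5, 4, 0, 10, 11, 9]
  invFun := ![9, 2, 1, 6, 8, 7, 3, 4, 5, 12, 10, 11, 0]
  left_inv := by decide
  right_inv := by decide

/-- The point root labelled by `P`. -/
def pointRoot (P : Point) : V := pt (pointLabel.symm P)

/-- The root labelled by the line `P⊥` polar to the point `P`. -/
def lineRoot (P : Point) : V := lnr (polarity (pointLabel.symm P))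

theorem pointRoot_pointLabel (i : Fin 13) : pointRoot (pointLabel i) = pt i := by
  rw [pointRoot, Equiv.symm_apply_apply]

theorem lineRoot_pointLabel (i : Fin 13) : lineRoot (pointLabel i) = lnr (polarity i) := by
  rw [lineRoot, Equiv.symm_apply_apply]

theorem range_pointRoot : Set.range pointRoot = Set.range pt :=
  pointLabel.symm.surjective.range_comp pt

theorem range_lineRoot : Set.range lineRoot = Set.range lnr :=
  (pointLabel.symm.trans polarity).surjective.range_comp lnr

theorem herm_pointRoot_pointRoot [DecidableEq Point] (P Q : Point) :
    herm (pointRoot P) (pointRoot Q) = if P = Q then -3 else 0 := by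
  have hgram : ∀ i j, eisHerm (ptEis i) (ptEis j) = if i = j then ⟨-3, 0⟩ else 0 := by
    decide +kernel
  obtain ⟨i, rfl⟩ := pointLabel.surjective P
  obtain ⟨j, rfl⟩ := pointLabel.surjective Q
  rw [pointRoot_pointLabel, pointRoot_pointLabel, ← eisEmbed_ptEis, ← eisEmbed_ptEis,
    herm_eisEmbed, hgram]
  simp [apply_ite (algebraMap Eis ℂ), algebraMap_eis_apply]

theorem herm_lineRoot_lineRoot [DecidableEq Point] (P Q : Point) :
    herm (lineRoot P) (lineRoot Q) = if P = Q then -3 else 0 := by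
  have hgram : ∀ i j, eisHerm (lnEis i) (lnEis j) = if i = j then ⟨-3, 0⟩ else 0 := by
    decide +kernel
  obtain ⟨i, rfl⟩ := pointLabel.surjective P
  obtain ⟨j, rfl⟩ := pointLabel.surjective Q
  rw [lineRoot_pointLabel, lineRoot_pointLabel, ← eisEmbed_lnEis, ← eisEmbed_lnEis,
    herm_eisEmbed, hgram]
  simp [apply_ite (algebraMap Eis ℂ), algebraMap_eis_apply]

theorem herm_pointRoot_lineRoot (P Q : Point) [Decidable (orthogonal P Q)] :
    herm (pointRoot P) (lineRoot Q) = if orthogonal P Q then -(ω * θ) else 0 := by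
  have hgram : ∀ i j, eisHerm (ptEis i) (lnEis (polarity j)) =
      if pointCoord i ⬝ᵥ pointCoord j = 0 then ⟨2, 1⟩ else 0 := by decide +kernel
  have hvalue : algebraMap Eis ℂ ⟨2, 1⟩ = -(ω * θ) := by
    rw [algebraMap_eis_apply, θ_eq]
    push_cast
    linear_combination 2 * ω_sq
  obtain ⟨i, rfl⟩ := pointLabel.surjective P
  obtain ⟨j, rfl⟩ := pointLabel.surjective Q
  have horth : orthogonal (pointLabel i) (pointLabel j) ↔ pointCoord i ⬝ᵥ pointCoord j = 0 :=
    orthogonal_mk (pointCoord_ne_zero i) (pointCoord_ne_zero j)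
  rw [pointRoot_pointLabel, lineRoot_pointLabel, ← eisEmbed_ptEis, ← eisEmbed_lnEis,
    herm_eisEmbed, hgram]
  simp only [apply_ite (algebraMap Eis ℂ), map_zero, horth, hvalue]

theorem adj_pointRoot_lineRoot_iff (P Q : Point) :
    Adj (pointRoot P) (lineRoot Q) ↔ orthogonal P Q := by
  classical
  rw [Adj, herm_pointRoot_lineRoot]
  split_ifs with h
  · simp [h, norm_ω, norm_θ]
  · simp [h, eq_comm (a := (0 : ℝ))]

theorem pointRoot_injective : Function.Injective pointRoot := by
  classical
  intro P Q h
  by_contra hne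
  simpa [herm_pointRoot_pointRoot, hne] using congrArg (herm (pointRoot P)) h

theorem lineRoot_injective : Function.Injective lineRoot := by
  classical
  intro P Q h
  by_contra hne
  simpa [herm_lineRoot_lineRoot, hne] using congrArg (herm (lineRoot P)) h

theorem D26_eq : D26 = Set.range pointRoot ∪ Set.range lineRoot := by
  rw [range_pointRoot, range_lineRoot, D26]

theorem linearEquiv_eq_one_of_forall_mem_D26 {g : V ≃ₗ[ℂ] V} (h : ∀ r ∈ D26, g r = r) : g = 1 :=
  LinearEquiv.toLinearMap_injective (LinearMap.ext_on span_D26_eq_top h)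

theorem exists_mem_AutL_of_gram_eq {x y : Point → V}
    (hspan : Submodule.span Eis (Set.range x ∪ Set.range y) = Submodule.span Eis D26)
    (hx : ∀ P Q, herm (x P) (x Q) = herm (pointRoot P) (pointRoot Q))
    (hy : ∀ P Q, herm (y P) (y Q) = herm (lineRoot P) (lineRoot Q))
    (hxy : ∀ P Q, herm (x P) (y Q) = herm (pointRoot P) (lineRoot Q)) :
    ∃ T ∈ AutL, (∀ P, T (pointRoot P) = x P) ∧ ∀ P, T (lineRoot P) = y P := by
  have htop : Submodule.span ℂ (Set.range (Sum.elim pointRoot lineRoot)) = ⊤ := by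
    rw [Set.Sum.elim_range, ← D26_eq, span_D26_eq_top]
  have htop' : Submodule.span ℂ (Set.range (Sum.elim x y)) = ⊤ := by
    rw [Set.Sum.elim_range, ← Submodule.span_span_of_tower Eis, hspan,
      Submodule.span_span_of_tower, span_D26_eq_top]
  obtain ⟨T, hT, hherm⟩ := exists_isometry_of_gram_eq separatingRight_hermForm htop htop' <| by
    rintro (P | P) (Q | Q)
    · exact hx P Q
    · exact hxy P Q
    · simpa only [conj_herm] using! congrArg conj (hxy Q P)
    · exact hy P Q
  have himage : T '' Lset = Lset := by
    have hD : T '' D26 = Set.range x ∪ Set.range y := by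
      rw [D26_eq, ← Set.Sum.elim_range, ← Set.range_comp, ← Set.Sum.elim_range]
      exact congrArg Set.range (funext hT)
    have hmap := Submodule.map_span (T.toLinearMap.restrictScalars Eis) D26
    rw [Lset_eq_span_D26]
    refine (congrArg SetLike.coe hmap).trans ?_
    exact congrArg SetLike.coe ((congrArg (Submodule.span Eis) hD).trans hspan)
  refine ⟨T, ⟨fun v => ?_, hherm⟩, fun P => hT (.inl P), fun P => hT (.inr P)⟩
  conv_rhs => rw [← himage, T.injective.mem_set_image]

end Labelling

/-! ### The group `G` is the collineation group of `P²(𝔽₃)` -/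

section DiagramGroup

open Projectivization (orthogonal)

theorem mem_Gsub_of_perm {g : V ≃ₗ[ℂ] V} (hg : g ∈ AutL) {k l : Equiv.Perm Point}
    (hk : ∀ P, g (pointRoot P) = pointRoot (k P)) (hl : ∀ P, g (lineRoot P) = lineRoot (l P)) :
    g ∈ Gsub := by
  refine ⟨hg, ?_, ?_⟩
  · rw [← range_pointRoot, ← Set.range_comp, ← k.surjective.range_comp pointRoot]
    exact congrArg Set.range (funext hk)
  · rw [← range_lineRoot, ← Set.range_comp, ← l.surjective.range_comp lineRoot]
    exact congrArg Set.range (funext hl)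

theorem exists_perm_of_mem_Gsub {g : V ≃ₗ[ℂ] V} (hg : g ∈ Gsub) :
    ∃ k l : Equiv.Perm Point, (∀ P, g (pointRoot P) = pointRoot (k P)) ∧
      (∀ P, g (lineRoot P) = lineRoot (l P)) ∧
      ∀ P Q, orthogonal (k P) (l Q) ↔ orthogonal P Q := by
  obtain ⟨⟨-, hherm⟩, hpt, hln⟩ := hg
  rw [← range_pointRoot] at hpt
  rw [← range_lineRoot] at hln
  obtain ⟨k, hk⟩ := exists_perm_of_image_range_eq g.injective pointRoot_injective hpt
  obtain ⟨l, hl⟩ := exists_perm_of_image_range_eq g.injective lineRoot_injective hln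
  refine ⟨k, l, hk, hl, fun P Q => ?_⟩
  rw [← adj_pointRoot_lineRoot_iff, ← adj_pointRoot_lineRoot_iff, Adj, Adj, ← hk, ← hl, hherm]

theorem exists_mem_Gsub_of_orthogonal_iff {k l : Equiv.Perm Point}
    (h : ∀ P Q, orthogonal (k P) (l Q) ↔ orthogonal P Q) :
    ∃ g ∈ Gsub, (∀ P, g (pointRoot P) = pointRoot (k P)) ∧
      ∀ P, g (lineRoot P) = lineRoot (l P) := by
  classical
  have hspan : Submodule.span Eis (Set.range (pointRoot ∘ k) ∪ Set.range (lineRoot ∘ l)) =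
      Submodule.span Eis D26 := by
    rw [k.surjective.range_comp, l.surjective.range_comp, D26_eq]
  obtain ⟨g, hg, hgk, hgl⟩ := exists_mem_AutL_of_gram_eq hspan
    (fun P Q => by simp [herm_pointRoot_pointRoot])
    (fun P Q => by simp [herm_lineRoot_lineRoot])
    (fun P Q => by simp [herm_pointRoot_lineRoot, h])
  exact ⟨g, mem_Gsub_of_perm hg hgk hgl, hgk, hgl⟩

/-- The action of `G` on the labels of the point roots. -/
def gsubPerm : Gsub →* Equiv.Perm Point :=
  MonoidHom.mk' (fun g => (exists_perm_of_mem_Gsub g.2).choose) fun g h => by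
    ext P
    have hspec (g : Gsub) (P : Point) :
        (g : V ≃ₗ[ℂ] V) (pointRoot P) = pointRoot ((exists_perm_of_mem_Gsub g.2).choose P) :=
      (exists_perm_of_mem_Gsub g.2).choose_spec.choose_spec.1 P
    apply pointRoot_injective
    rw [Equiv.Perm.mul_apply, ← hspec, ← hspec, ← hspec]
    rfl

theorem pointRoot_gsubPerm (g : Gsub) (P : Point) :
    pointRoot (gsubPerm g P) = (g : V ≃ₗ[ℂ] V) (pointRoot P) :=
  ((exists_perm_of_mem_Gsub g.2).choose_spec.choose_spec.1 P).symm

theorem gsubPerm_eq {g : Gsub} {k : Equiv.Perm Point}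
    (h : ∀ P, (g : V ≃ₗ[ℂ] V) (pointRoot P) = pointRoot (k P)) : gsubPerm g = k :=
  Equiv.ext fun P => pointRoot_injective ((pointRoot_gsubPerm g P).trans (h P))

theorem gsubPerm_injective : Function.Injective gsubPerm := by
  refine (injective_iff_map_eq_one _).2 fun g hg => Subtype.ext ?_
  obtain ⟨k, l, hk, hl, hkl⟩ := exists_perm_of_mem_Gsub g.2
  obtain rfl : k = 1 := (gsubPerm_eq hk).symm.trans hg
  obtain rfl : l = 1 := eq_one_of_forall_orthogonal_iff hkl
  refine linearEquiv_eq_one_of_forall_mem_D26 fun r hr => ?_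
  rw [D26_eq] at hr
  obtain ⟨P, rfl⟩ | ⟨P, rfl⟩ := hr
  exacts [hk P, hl P]

theorem range_gsubPerm : gsubPerm.range = collineations (ZMod 3) (Fin 3) := by
  ext k
  constructor
  · rintro ⟨g, rfl⟩
    obtain ⟨k, l, hk, -, hkl⟩ := exists_perm_of_mem_Gsub g.2
    exact gsubPerm_eq hk ▸ ⟨l, hkl⟩
  · rintro ⟨l, hkl⟩
    obtain ⟨g, hg, hgk, -⟩ := exists_mem_Gsub_of_orthogonal_iff hkl
    exact ⟨⟨g, hg⟩, gsubPerm_eq hgk⟩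

/-- The isomorphism `G ≅ PGL₃(𝔽₃)`. -/
def gsubEquivPGL3F3 : Gsub ≃* PGL3F3 :=
  (MonoidHom.ofInjective gsubPerm_injective).trans <|
    (MulEquiv.subgroupCongr range_gsubPerm).trans
      (projectiveGeneralLinearGroupEquivCollineations (Fin 3)).symm

theorem exists_mem_Gsub_pointRoot_eq (P Q : Point) : ∃ g ∈ Gsub, g (pointRoot P) = pointRoot Q := by
  obtain ⟨A, rfl⟩ := MulAction.exists_smul_eq (Matrix.GeneralLinearGroup (Fin 3) (ZMod 3)) P Q
  obtain ⟨l, h⟩ := toPermHom_mem_collineations A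
  obtain ⟨g, hg, hgk, -⟩ := exists_mem_Gsub_of_orthogonal_iff h
  exact ⟨g, hg, hgk P⟩

end DiagramGroup

/-! ### The automorphism `σ` and the group `Q` -/

section Polarity

open scoped Pointwise

/-- The characterization of `σ`: the automorphism of `L` that lifts the standard polarity of
`P²(𝔽₃)`, normalized by `σ(x) = -ω l` and `σ(l) = x`. -/
structure IsPolarityLift (σ : V ≃ₗ[ℂ] V) : Prop where
  mem_AutL : σ ∈ AutL
  apply_pointRoot (P : Point) : σ (pointRoot P) = (-ω) • lineRoot P
  apply_lineRoot (P : Point) : σ (lineRoot P) = pointRoot P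

theorem span_range_smul_lineRoot_union_range_pointRoot :
    Submodule.span Eis (Set.range (fun P => (-ω) • lineRoot P) ∪ Set.range pointRoot) =
      Submodule.span Eis D26 := by
  have hω (v : V) : (-ω) • v = (⟨0, -1⟩ : Eis) • v := by
    rw [algebra_compatible_smul ℂ (⟨0, -1⟩ : Eis) v, algebraMap_eis_apply]
    simp
  have hunit : IsUnit (⟨0, -1⟩ : Eis) := IsUnit.of_mul_eq_one ⟨1, 1⟩ (by decide)
  simp only [hω]
  rw [Set.range_smul, Submodule.span_union, Submodule.span_smul_eq_of_isUnit _ _ hunit,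
    ← Submodule.span_union, Set.union_comm, ← D26_eq]

theorem herm_neg_ω_smul_neg_ω_smul (u v : V) : herm ((-ω) • u) ((-ω) • v) = herm u v := by
  rw [herm_smul_left, herm_smul_right, map_neg, conj_ω]
  linear_combination -(ω_sq * herm u v)

theorem herm_neg_ω_smul_lineRoot_pointRoot (P Q : Point) :
    herm ((-ω) • lineRoot P) (pointRoot Q) = herm (pointRoot P) (lineRoot Q) := by
  classical
  rw [herm_smul_left, ← conj_herm, herm_pointRoot_lineRoot, herm_pointRoot_lineRoot,
    Projectivization.orthogonal_comm]
  split_ifs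
  · simp only [θ_eq, map_neg, map_mul, map_add, map_one, map_ofNat, conj_ω]
    linear_combination (-2 * ω - 1) * ω_sq
  · simp

theorem exists_isPolarityLift : ∃ σ, IsPolarityLift σ := by
  classical
  obtain ⟨σ, hσ, hpoint, hline⟩ := exists_mem_AutL_of_gram_eq
    span_range_smul_lineRoot_union_range_pointRoot
    (fun P Q => by
      rw [herm_neg_ω_smul_neg_ω_smul, herm_lineRoot_lineRoot, herm_pointRoot_pointRoot])
    (fun P Q => by rw [herm_pointRoot_pointRoot, herm_lineRoot_lineRoot])
    herm_neg_ω_smul_lineRoot_pointRoot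
  exact ⟨σ, hσ, hpoint, hline⟩

theorem eq_one_of_smul_pointRoot_eq {c : ℂ} {P Q : Point} (h : c • pointRoot P = pointRoot Q) :
    c = 1 := by
  classical
  have hpair := congrArg (herm (pointRoot Q)) h
  rw [herm_smul_right, herm_pointRoot_pointRoot, herm_pointRoot_pointRoot, if_pos rfl] at hpair
  split_ifs at hpair
  · linear_combination -hpair / 3
  · norm_num at hpair

theorem smul_lineRoot_ne_pointRoot {c : ℂ} (hc : ‖c‖ = 1) (P Q : Point) :
    c • lineRoot P ≠ pointRoot Q := by
  classical
  intro h
  have hpair := congrArg (fun v => ‖herm (pointRoot Q) v‖) h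
  simp only [herm_smul_right, herm_pointRoot_lineRoot, herm_pointRoot_pointRoot, if_true] at hpair
  split_ifs at hpair
  · have hsqrt : √3 = 3 := by simpa [hc, norm_ω, norm_θ] using hpair
    norm_num [Real.sqrt_eq_iff_eq_sq] at hsqrt
  · simp at hpair

namespace IsPolarityLift

variable {σ : V ≃ₗ[ℂ] V}

theorem sigmaSpec (hσ : IsPolarityLift σ) : SigmaSpec σ := by
  refine ⟨hσ.mem_AutL, polarity, fun i j => ?_, fun i => ?_, fun i => ?_⟩
  · simp only [← pointRoot_pointLabel, ← lineRoot_pointLabel, adj_pointRoot_lineRoot_iff]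
    exact Projectivization.orthogonal_comm
  · rw [← pointRoot_pointLabel, ← lineRoot_pointLabel, hσ.apply_pointRoot]
  · rw [← pointRoot_pointLabel, ← lineRoot_pointLabel, hσ.apply_lineRoot]

theorem apply_apply (hσ : IsPolarityLift σ) (v : V) : σ (σ v) = (-ω) • v := by
  have h : σ.toLinearMap ∘ₗ σ.toLinearMap = (-ω) • LinearMap.id := by
    refine LinearMap.ext_on span_D26_eq_top fun r hr => ?_
    rw [D26_eq] at hr
    obtain ⟨P, rfl⟩ | ⟨P, rfl⟩ := hr <;> simp [hσ.apply_pointRoot, hσ.apply_lineRoot]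
  exact LinearMap.congr_fun h v

theorem pow_two_mul_apply (hσ : IsPolarityLift σ) (m : ℕ) (v : V) :
    (σ ^ (2 * m)) v = (-ω) ^ m • v := by
  induction m with
  | zero => simp
  | succ m ih =>
    rw [mul_add_one, add_comm, pow_add, LinearEquiv.mul_apply, ih, sq, LinearEquiv.mul_apply,
      hσ.apply_apply, smul_smul, ← pow_succ']

theorem pow_two_mul_add_one_apply_pointRoot (hσ : IsPolarityLift σ) (m : ℕ) (P : Point) :
    (σ ^ (2 * m + 1)) (pointRoot P) = (-ω) ^ (m + 1) • lineRoot P := by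
  rw [pow_succ, LinearEquiv.mul_apply, hσ.apply_pointRoot, hσ.pow_two_mul_apply, smul_smul,
    ← pow_succ]

theorem twelve_dvd_of_pow_mem_Gsub (hσ : IsPolarityLift σ) {n : ℕ} (h : σ ^ n ∈ Gsub) :
    12 ∣ n := by
  obtain ⟨k, -, hk, -⟩ := exists_perm_of_mem_Gsub h
  have hpoint := hk (pointLabel 0)
  obtain ⟨m, rfl | rfl⟩ := n.even_or_odd'
  · rw [hσ.pow_two_mul_apply] at hpoint
    have h6 : 6 ∣ m :=
      orderOf_neg_ω ▸ orderOf_dvd_of_pow_eq_one (eq_one_of_smul_pointRoot_eq hpoint)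
    omega
  · rw [hσ.pow_two_mul_add_one_apply_pointRoot] at hpoint
    exact absurd hpoint (smul_lineRoot_ne_pointRoot (by simp [norm_ω]) _ _)

theorem orderOf_eq (hσ : IsPolarityLift σ) : orderOf σ = 12 := by
  have hpow : σ ^ (2 * 6) = 1 := LinearEquiv.ext fun v => by
    rw [hσ.pow_two_mul_apply, ← orderOf_neg_ω, pow_orderOf_eq_one, one_smul]
    rfl
  refine Nat.dvd_antisymm (orderOf_dvd_of_pow_eq_one hpow) (hσ.twelve_dvd_of_pow_mem_Gsub ?_)
  rw [pow_orderOf_eq_one]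
  exact one_mem Gsub

theorem disjoint_zpowers_Gsub (hσ : IsPolarityLift σ) : Disjoint (Subgroup.zpowers σ) Gsub := by
  have hfin : IsOfFinOrder σ := orderOf_pos_iff.1 (by rw [hσ.orderOf_eq]; norm_num)
  rw [Subgroup.disjoint_def]
  intro g hgσ hg
  obtain ⟨n, rfl⟩ := hfin.mem_powers_iff_mem_zpowers.2 hgσ
  exact orderOf_dvd_iff_pow_eq_one.1 (hσ.orderOf_eq ▸ hσ.twelve_dvd_of_pow_mem_Gsub hg)

theorem inv_apply_pointRoot (hσ : IsPolarityLift σ) (P : Point) :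
    σ⁻¹ (pointRoot P) = lineRoot P := by
  rw [← hσ.apply_lineRoot]
  exact σ.symm_apply_apply _

theorem inv_apply_lineRoot (hσ : IsPolarityLift σ) (P : Point) :
    σ⁻¹ (lineRoot P) = (-ω)⁻¹ • pointRoot P := by
  rw [eq_inv_smul_iff₀ (neg_ne_zero.2 ω_ne_zero), ← map_smul, ← hσ.apply_pointRoot]
  exact σ.symm_apply_apply _

theorem conj_mem_Gsub (hσ : IsPolarityLift σ) {g : V ≃ₗ[ℂ] V} (hg : g ∈ Gsub) :
    σ * g * σ⁻¹ ∈ Gsub := by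
  obtain ⟨k, l, hk, hl, -⟩ := exists_perm_of_mem_Gsub hg
  have hω : -ω ≠ 0 := neg_ne_zero.2 ω_ne_zero
  refine mem_Gsub_of_perm (k := l) (l := k)
    (mul_mem (mul_mem hσ.mem_AutL hg.1) (inv_mem hσ.mem_AutL)) (fun P => ?_) (fun P => ?_)
  · simp only [LinearEquiv.mul_apply, hσ.inv_apply_pointRoot, hl, hσ.apply_lineRoot]
  · simp only [LinearEquiv.mul_apply, hσ.inv_apply_lineRoot, map_smul, hk, hσ.apply_pointRoot,
      inv_smul_smul₀ hω]

theorem mem_normalizer_Gsub (hσ : IsPolarityLift σ) :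
    σ ∈ Subgroup.normalizer (Gsub : Set (V ≃ₗ[ℂ] V)) :=
  have : Finite (Gsub : Set (V ≃ₗ[ℂ] V)) := Finite.of_injective _ gsubPerm_injective
  Subgroup.mem_normalizer_fintype fun _ hg => hσ.conj_mem_Gsub hg

theorem exists_mem_QGroup_pointRoot_eq (hσ : IsPolarityLift σ) (P : Point) {w : V}
    (hw : w ∈ UnitRoots) : ∃ q ∈ QGroup σ, q (pointRoot P) = w := by
  have hσQ : σ ∈ QGroup σ := Subgroup.subset_closure (Or.inl rfl)
  have hroot {r : V} (hr : r ∈ D26) : ∃ q ∈ QGroup σ, q (pointRoot P) = r := by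
    rw [D26_eq] at hr
    obtain ⟨Q, rfl⟩ | ⟨Q, rfl⟩ := hr <;>
      obtain ⟨g, hg, hgP⟩ := exists_mem_Gsub_pointRoot_eq P Q <;>
      have hgQ : g ∈ QGroup σ := Subgroup.subset_closure (Or.inr hg)
    · exact ⟨g, hgQ, hgP⟩
    · exact ⟨σ⁻¹ * g, mul_mem (inv_mem hσQ) hgQ, by
        rw [LinearEquiv.mul_apply, hgP, hσ.inv_apply_pointRoot]⟩
  obtain ⟨u, hu, r, hr, rfl⟩ := hw
  obtain ⟨m, rfl⟩ := hu.exists_neg_ω_pow_eq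
  obtain ⟨q, hq, rfl⟩ := hroot hr
  exact ⟨σ ^ (2 * m) * q, mul_mem (pow_mem hσQ _) hq, hσ.pow_two_mul_apply m _⟩

theorem exists_mem_QGroup_apply_eq (hσ : IsPolarityLift σ) {v w : V} (hv : v ∈ UnitRoots)
    (hw : w ∈ UnitRoots) : ∃ q ∈ QGroup σ, q v = w := by
  obtain ⟨p, hp, rfl⟩ := hσ.exists_mem_QGroup_pointRoot_eq (pointLabel 0) hv
  obtain ⟨q, hq, rfl⟩ := hσ.exists_mem_QGroup_pointRoot_eq (pointLabel 0) hw
  exact ⟨q * p⁻¹, mul_mem hq (inv_mem hp), congrArg q (p.symm_apply_apply _)⟩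

theorem exists_monoidHom_QGroup_zmod (hσ : IsPolarityLift σ) :
    ∃ ψ : QGroup σ →* Multiplicative (ZMod 12),
      Function.Surjective ψ ∧ ψ.ker = Gsub.subgroupOf (QGroup σ) := by
  have hQ : QGroup σ = Subgroup.zpowers σ ⊔ Gsub := by
    rw [QGroup, Subgroup.closure_union, Subgroup.zpowers_eq_closure, Subgroup.closure_eq]
  rw [hQ, ← hσ.orderOf_eq]
  exact exists_monoidHom_zmod_of_disjoint_zpowers hσ.mem_normalizer_Gsub hσ.disjoint_zpowers_Gsub

end IsPolarityLift

theorem eq_one_of_forall_mem_UnitRoots {q : V ≃ₗ[ℂ] V} (h : ∀ v ∈ UnitRoots, q v = v) : q = 1 :=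
  linearEquiv_eq_one_of_forall_mem_D26 fun r hr => h r ⟨1, Or.inl rfl, r, hr, (one_smul ℂ r).symm⟩

end Polarity

/-- There is an automorphism `σ` of `L` of order 12 interchanging the point roots
and line roots of `D` along a polarity of `P²(𝔽₃)` (with `σ(x) = -ωl`, `σ(l) = x`
and `σ² = -ω`); conjugation by `σ` preserves `G ≅ PGL₃(𝔽₃)`, the group `Q = ⟨G, σ⟩`
fits in an exact sequence `1 → PGL₃(𝔽₃) → Q → ℤ/12ℤ → 1`, and `Q` acts transitively
and faithfully on the unit multiples of the 26 roots of `D`. -/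
theorem stmt12 : ∃ σ : V ≃ₗ[ℂ] V, SigmaSpec σ ∧ orderOf σ = 12 ∧
    (∀ v : V, σ (σ v) = (-ω) • v) ∧
    (∀ g ∈ Gsub, σ * g * σ⁻¹ ∈ Gsub) ∧
    Nonempty (Gsub ≃* PGL3F3) ∧
    (∃ ψ : QGroup σ →* Multiplicative (ZMod 12),
      Function.Surjective ψ ∧ ψ.ker = Gsub.subgroupOf (QGroup σ)) ∧
    (∀ v ∈ UnitRoots, ∀ w ∈ UnitRoots, ∃ q ∈ QGroup σ, q v = w) ∧
    (∀ q ∈ QGroup σ, (∀ v ∈ UnitRoots, q v = v) → q = 1) := by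
  obtain ⟨σ, hσ⟩ := exists_isPolarityLift
  exact ⟨σ, hσ.sigmaSpec, hσ.orderOf_eq, hσ.apply_apply, fun _ hg => hσ.conj_mem_Gsub hg,
    ⟨gsubEquivPGL3F3⟩, hσ.exists_monoidHom_QGroup_zmod,
    fun _ hv _ hw => hσ.exists_mem_QGroup_apply_eq hv hw,
    fun _ _ hq => eq_one_of_forall_mem_UnitRoots hq⟩

end Bimonster
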